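/- arXiv:2006.05624 — 2 statements merged into one kernel-verified Lean document; each statement's English description precedes it below -/
import Mathlib

section
/- Let D(x) = Σ_i p_i(x)·(log p_i(x) − log q_i(x)), where each p_i and q_i is twice continuously differentiable on ℝ, p_i(x) > 0 and q_i(x) > 0 for every i and every x, Σ_i p_i(x) = 1 and Σ_i q_i(x) = 1 for all x, and suppose p_i(x₀) = q_i(x₀) for every i at a point x₀. Then the second derivative of D at x₀ equals Σ_i p_i(x₀)·( p_i′(x₀)/p_i(x₀) − q_i′(x₀)/q_i(x₀) )², i.e. Σ_i p_i(x₀)·( (log∘p_i)′(x₀) − (log∘q_i)′(x₀) )². This is the induced L₂ penalty, on parameters shared between the two networks, of the adjoint loss. -/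
open Real Finset

theorem hasDerivAt_mul_log_sub_log {f g : ℝ → ℝ} {f' g' x : ℝ} (hf : HasDerivAt f f' x)
    (hg : HasDerivAt g g' x) (hfx : f x ≠ 0) (hgx : g x ≠ 0) :
    HasDerivAt (fun t => f t * (Real.log (f t) - Real.log (g t)))
      (f' * (Real.log (f x) - Real.log (g x)) + f x * (f' / f x - g' / g x)) x :=
  hf.mul ((hf.log hfx).sub (hg.log hgx))

/-- The second derivative of a Kullback–Leibler summand at a point where both functions agree. -/
theorem hasDerivAt_deriv_mul_log_sub_log {f g f' g' : ℝ → ℝ} {f'' g'' x : ℝ}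
    (hf : HasDerivAt f (f' x) x) (hg : HasDerivAt g (g' x) x)
    (hf' : HasDerivAt f' f'' x) (hg' : HasDerivAt g' g'' x) (hfx : f x ≠ 0) (hfg : f x = g x) :
    HasDerivAt
      (fun t => f' t * (Real.log (f t) - Real.log (g t)) + f t * (f' t / f t - g' t / g t))
      (f x * (f' x / f x - g' x / g x) ^ 2 + (f'' - g'')) x := by
  have hgx : g x ≠ 0 := hfg ▸ hfx
  refine ((hf'.mul ((hf.log hfx).sub (hg.log hgx))).add
    (hf.mul ((hf'.div hf hfx).sub (hg'.div hg hgx)))).congr_deriv ?_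
  simp only [Pi.sub_apply, Pi.div_apply, ← hfg]
  field_simp
  ring

theorem sum_deriv_deriv_eq_zero {ι : Type*} [Fintype ι] {f : ι → ℝ → ℝ} {c : ℝ}
    (hf : ∀ i, Differentiable ℝ (f i)) (hf' : ∀ i, Differentiable ℝ (deriv (f i)))
    (hsum : ∀ x, ∑ i, f i x = c) (x : ℝ) : ∑ i, deriv (deriv (f i)) x = 0 := by
  have hfirst : ∀ y, ∑ i, deriv (f i) y = 0 := fun y => by
    rw [← deriv_fun_sum fun i _ => hf i y]
    simp [hsum]
  rw [← deriv_fun_sum fun i _ => hf' i x]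
  simp [hfirst]

theorem adjoint_kl_induced_penalty_shared
    (n : ℕ) (hn : 0 < n) (p q : Fin n → ℝ → ℝ) (x₀ : ℝ)
    (hp : ∀ i, ContDiff ℝ 2 (p i))
    (hq : ∀ i, ContDiff ℝ 2 (q i))
    (hppos : ∀ i x, 0 < p i x) (hqpos : ∀ i x, 0 < q i x)
    (hpsum : ∀ x, ∑ i, p i x = 1) (hqsum : ∀ x, ∑ i, q i x = 1)
    (hagree : ∀ i, p i x₀ = q i x₀)
    (D : ℝ → ℝ)
    (hD : D = fun t => ∑ i, p i t * (Real.log (p i t) - Real.log (q i t))) :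
    deriv (deriv D) x₀ =
      ∑ i, p i x₀ * (deriv (p i) x₀ / p i x₀ - deriv (q i) x₀ / q i x₀) ^ 2 ∧
    deriv (deriv D) x₀ =
      ∑ i, p i x₀ * (deriv (Real.log ∘ p i) x₀ - deriv (Real.log ∘ q i) x₀) ^ 2 := by
  have hp₁ : ∀ i, Differentiable ℝ (p i) := fun i => (hp i).differentiable two_ne_zero
  have hq₁ : ∀ i, Differentiable ℝ (q i) := fun i => (hq i).differentiable two_ne_zero
  have hp₂ : ∀ i, Differentiable ℝ (deriv (p i)) := fun i => (hp i).differentiable_deriv_two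
  have hq₂ : ∀ i, Differentiable ℝ (deriv (q i)) := fun i => (hq i).differentiable_deriv_two
  have hderiv : deriv D = fun t => ∑ i, (deriv (p i) t * (Real.log (p i t) - Real.log (q i t)) +
      p i t * (deriv (p i) t / p i t - deriv (q i) t / q i t)) := by
    funext t
    rw [hD]
    exact (HasDerivAt.fun_sum fun i _ => hasDerivAt_mul_log_sub_log (hp₁ i t).hasDerivAt
      (hq₁ i t).hasDerivAt (hppos i t).ne' (hqpos i t).ne').deriv
  have hmain : deriv (deriv D) x₀ =
      ∑ i, p i x₀ * (deriv (p i) x₀ / p i x₀ - deriv (q i) x₀ / q i x₀) ^ 2 := by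
    rw [hderiv, (HasDerivAt.fun_sum fun i _ => hasDerivAt_deriv_mul_log_sub_log
      (hp₁ i x₀).hasDerivAt (hq₁ i x₀).hasDerivAt (hp₂ i x₀).hasDerivAt (hq₂ i x₀).hasDerivAt
      (hppos i x₀).ne' (hagree i)).deriv, sum_add_distrib, sum_sub_distrib,
      sum_deriv_deriv_eq_zero hp₁ hp₂ hpsum, sum_deriv_deriv_eq_zero hq₁ hq₂ hqsum,
      sub_zero, add_zero]
  refine ⟨hmain, hmain.trans (sum_congr rfl fun i _ => ?_)⟩
  rw [((hp₁ i x₀).hasDerivAt.log (hppos i x₀).ne').deriv.symm,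
    ((hq₁ i x₀).hasDerivAt.log (hqpos i x₀).ne').deriv.symm]
  rfl
end

section
/- Let c : Fin n → ℝ be a fixed vector with c_i > 0 for every i, and let D(y) = Σ_i p_i(y)·(log p_i(y) − log c_i), where each p_i is twice continuously differentiable on ℝ, p_i(y) > 0 for every i and every y, Σ_i p_i(y) = 1 for all y, and suppose p_i(y₀) = c_i for every i at a point y₀. Then the second derivative of D at y₀ equals Σ_i p_i′(y₀)²/p_i(y₀), i.e. Σ_i p_i(y₀)·((log∘p_i)′(y₀))². This is the induced L₂ penalty, on parameters of the larger network not shared with the smaller network, of the adjoint loss. -/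
open Real Finset

/-- The first derivative of a relative entropy term `f * (log f - a)`. -/
lemma hasDerivAt_mul_log_sub_const {f : ℝ → ℝ} {f' t : ℝ} (a : ℝ)
    (hf : HasDerivAt f f' t) (h0 : f t ≠ 0) :
    HasDerivAt (fun s => f s * (Real.log (f s) - a)) (f' * (Real.log (f t) - a) + f') t := by
  refine (hf.mul ((hf.log h0).sub_const a)).congr_deriv ?_
  field_simp

/-- The derivative of the relative entropy of a curve of probability vectors with respect to a
fixed vector. -/
lemma deriv_sum_mul_log_sub {ι : Type*} [Fintype ι] {p : ι → ℝ → ℝ} (c : ι → ℝ)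
    (hp : ∀ i, Differentiable ℝ (p i)) (hp0 : ∀ i y, p i y ≠ 0) (hsum : ∀ y, ∑ i, p i y = 1) :
    deriv (fun t => ∑ i, p i t * (Real.log (p i t) - Real.log (c i))) =
      fun t => ∑ i, deriv (p i) t * (Real.log (p i t) - Real.log (c i)) := by
  funext t
  have hzero : ∑ i, deriv (p i) t = 0 := by
    rw [← deriv_fun_sum fun i _ => hp i t, funext hsum, deriv_const]
  rw [(HasDerivAt.fun_sum fun i _ => hasDerivAt_mul_log_sub_const (Real.log (c i))
    (hp i t).hasDerivAt (hp0 i t)).deriv, Finset.sum_add_distrib, hzero, add_zero]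

theorem adjoint_kl_induced_penalty_unshared
    (n : ℕ) (hn : 0 < n) (p : Fin n → ℝ → ℝ) (c : Fin n → ℝ) (y₀ : ℝ)
    (hc : ∀ i, 0 < c i)
    (hp : ∀ i, ContDiff ℝ 2 (p i))
    (hppos : ∀ i y, 0 < p i y)
    (hpsum : ∀ y, ∑ i, p i y = 1)
    (hagree : ∀ i, p i y₀ = c i)
    (D : ℝ → ℝ)
    (hD : D = fun t => ∑ i, p i t * (Real.log (p i t) - Real.log (c i))) :
    deriv (deriv D) y₀ = ∑ i, (deriv (p i) y₀) ^ 2 / p i y₀ ∧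
    deriv (deriv D) y₀ = ∑ i, p i y₀ * (deriv (Real.log ∘ p i) y₀) ^ 2 := by
  have hdiff : ∀ i, Differentiable ℝ (p i) := fun i => (hp i).differentiable (by norm_num)
  have hdiff' : ∀ i, Differentiable ℝ (deriv (p i)) := fun i =>
    (hp i).differentiable_deriv_two
  have hne : ∀ i y, p i y ≠ 0 := fun i y => (hppos i y).ne'
  have hsecond : deriv (deriv D) y₀ = ∑ i, (deriv (p i) y₀) ^ 2 / p i y₀ := by
    rw [hD, deriv_sum_mul_log_sub c hdiff hne hpsum,
      (HasDerivAt.fun_sum fun i _ => (hdiff' i y₀).hasDerivAt.fun_mul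
        (((hdiff i y₀).hasDerivAt.log (hne i y₀)).sub_const (Real.log (c i)))).deriv]
    refine Finset.sum_congr rfl fun i _ => ?_
    rw [hagree i]
    ring
  refine ⟨hsecond, hsecond.trans (Finset.sum_congr rfl fun i _ => ?_)⟩
  have hlog : deriv (Real.log ∘ p i) y₀ = deriv (p i) y₀ / p i y₀ :=
    ((hdiff i y₀).hasDerivAt.log (hne i y₀)).deriv
  have := hne i y₀
  rw [hlog]
  field_simp
end
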